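/- arXiv:2212.11836 — 6 statements merged into one kernel-verified Lean document; each statement's English description precedes it below -/
import Mathlib

section
/- Let A be a commutative ℂ-algebra, let D_Y : A → A be a ℂ-linear derivation, and let 𝒱 be a ℂ-vector space of ℂ-linear derivations of A that is normalized by D_Y, i.e. for every D_W ∈ 𝒱 the commutator [D_W, D_Y] again belongs to 𝒱. Let m be a radical ideal of A that contains the image D_W(A) for every D_W ∈ 𝒱, and let I be the ideal of A generated by the union of the images D_W(A) over all D_W ∈ 𝒱. Then for every f ∈ √I one has D_Y(f) ∈ m. -/
/-!
The ideal `I` generated by the images of the derivations in `V` is stable under `D`, since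
`D (W a) = W (D a) - ⁅W, D⁆ a` and both terms lie in images of elements of `V`. Over `ℚ`, the
radical of a `D`-stable ideal is `D`-stable: differentiating `f ^ (j + 1) * D f ^ (e + 1) ∈ I`
trades one factor `f` for a factor `D f`, so that `f ^ n ∈ I` leads to a power of `D f` in `I`.
Hence `D` maps `√I` into `√I`, which lies in every radical ideal containing the images.
-/

section StableIdeal

variable {R A : Type*} [CommSemiring R] [CommRing A] [Algebra R A]
  {D : Derivation R A A} {I : Ideal A} {f : A}

theorem derivation_mapsTo_span {s : Set A} (hs : Set.MapsTo D s (Ideal.span s)) :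
    Set.MapsTo D (Ideal.span s) (Ideal.span s) := by
  intro x hx
  induction hx using Submodule.span_induction with
  | mem x hx => exact hs hx
  | zero => simp
  | add x y _ _ hDx hDy => exact (D.map_add x y).symm ▸ add_mem hDx hDy
  | smul a x hx hDx =>
    rw [smul_eq_mul, D.leibniz]
    exact add_mem (Ideal.mul_mem_left _ a hDx) (Ideal.mul_mem_right _ _ hx)

theorem derivation_pow_succ_mul_apply_pow_succ (D : Derivation R A A) (f : A) (j e : ℕ) :
    D (f ^ (j + 1) * D f ^ (e + 1)) =
      ((j + 1 : ℕ) : A) * (f ^ j * D f ^ (e + 2)) +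
        f ^ (j + 1) * D f ^ e * (((e + 1 : ℕ) : A) * D (D f)) := by
  simp only [D.leibniz, D.leibniz_pow, smul_eq_mul, nsmul_eq_mul, Nat.add_sub_cancel]
  ring

theorem natCast_succ_mul_pow_mul_apply_pow_mem (hD : Set.MapsTo D I I) {j e : ℕ}
    (h : f ^ (j + 1) * D f ^ e ∈ I) :
    ((j + 1 : ℕ) : A) * (f ^ j * D f ^ (e + 2)) ∈ I := by
  have hmul : f ^ (j + 1) * D f ^ (e + 1) ∈ I := by
    simpa only [pow_succ (D f), mul_assoc] using I.mul_mem_right (D f) h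
  have hderiv : D (f ^ (j + 1) * D f ^ (e + 1)) ∈ I := hD hmul
  rw [derivation_pow_succ_mul_apply_pow_succ] at hderiv
  exact (I.add_mem_iff_left (I.mul_mem_right _ h)).mp hderiv

variable [Algebra ℚ A]

theorem pow_mul_apply_pow_mem (hD : Set.MapsTo D I I) {j e : ℕ}
    (h : f ^ (j + 1) * D f ^ e ∈ I) : f ^ j * D f ^ (e + 2) ∈ I := by
  have hunit : IsUnit ((j + 1 : ℕ) : A) := by
    simpa only [map_natCast] using
      (Nat.cast_ne_zero.mpr j.succ_ne_zero : ((j + 1 : ℕ) : ℚ) ≠ 0).isUnit.map (algebraMap ℚ A)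
  exact (I.unit_mul_mem_iff_mem hunit).mp (natCast_succ_mul_pow_mul_apply_pow_mem hD h)

theorem apply_pow_mem_of_pow_mul_apply_pow_mem (hD : Set.MapsTo D I I) {j e : ℕ}
    (h : f ^ j * D f ^ e ∈ I) : D f ^ (e + 2 * j) ∈ I := by
  induction j generalizing e with
  | zero => simpa using h
  | succ j ih =>
    convert ih (pow_mul_apply_pow_mem hD h) using 2
    ring

theorem derivation_mapsTo_radical (hD : Set.MapsTo D I I) :
    Set.MapsTo D I.radical I.radical := by
  rintro f ⟨n, hn⟩
  exact ⟨_, apply_pow_mem_of_pow_mul_apply_pow_mem hD (e := 0) (by simpa using hn)⟩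

end StableIdeal

section ImageIdeal

variable {R A : Type*} [CommRing R] [CommRing A] [Algebra R A]

/-- The ideal generated by the images of all derivations in `V`, for an arbitrary set `V`; it
plays the role of `I` in the main theorem. -/
def imageIdeal (V : Set (Derivation R A A)) : Ideal A :=
  Ideal.span (⋃ W ∈ V, Set.range W)

variable {V : Set (Derivation R A A)}

theorem apply_mem_imageIdeal {W : Derivation R A A} (hW : W ∈ V) (a : A) :
    W a ∈ imageIdeal V :=
  Ideal.subset_span (Set.mem_biUnion hW (Set.mem_range_self a))

theorem imageIdeal_le_iff {J : Ideal A} :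
    imageIdeal V ≤ J ↔ ∀ W ∈ V, ∀ a, W a ∈ J := by
  simp [imageIdeal, Ideal.span_le, Set.range_subset_iff]

theorem mapsTo_imageIdeal_of_normalizes {D : Derivation R A A} (hD : ∀ W ∈ V, ⁅W, D⁆ ∈ V) :
    Set.MapsTo D (imageIdeal V) (imageIdeal V) := by
  refine derivation_mapsTo_span fun x hx ↦ ?_
  obtain ⟨W, hW, a, rfl⟩ := Set.mem_iUnion₂.mp hx
  have hcomm : D (W a) = W (D a) - ⁅W, D⁆ a := by
    rw [Derivation.commutator_apply, sub_sub_cancel]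
  rw [hcomm]
  exact sub_mem (apply_mem_imageIdeal hW (D a)) (apply_mem_imageIdeal (hD W hW) a)

theorem derivation_normalizer_maps_radical_into_radical_ideal_general [Algebra ℚ A]
    {D : Derivation R A A} (hD : ∀ W ∈ V, ⁅W, D⁆ ∈ V)
    {m : Ideal A} (hm : m.IsRadical) (hmV : ∀ W ∈ V, ∀ a, W a ∈ m)
    {f : A} (hf : f ∈ (imageIdeal V).radical) : D f ∈ m := by
  have hDf : D f ∈ (imageIdeal V).radical :=
    derivation_mapsTo_radical (mapsTo_imageIdeal_of_normalizes hD) hf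
  exact hm.radical_le_iff.mpr (imageIdeal_le_iff.mpr hmV) hDf

end ImageIdeal

/-- Let `A` be a commutative `ℂ`-algebra, `DY` a `ℂ`-linear derivation of `A`,
and `V` a `ℂ`-vector space of derivations of `A` normalized by `DY`, i.e. `⁅DW, DY⁆ ∈ V` for
every `DW ∈ V`.  If `m` is a radical ideal of `A` containing the image of every `DW ∈ V`, and
`I` is the ideal generated by the union of these images, then `DY f ∈ m` for every
`f ∈ √I`. -/
theorem derivation_normalizer_maps_radical_into_radical_ideal
    {A : Type*} [CommRing A] [Algebra ℂ A]
    (DY : Derivation ℂ A A) (V : Submodule ℂ (Derivation ℂ A A))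
    (hV : ∀ DW ∈ V, ⁅DW, DY⁆ ∈ V)
    (m : Ideal A) (hm : m.IsRadical)
    (hmV : ∀ DW ∈ V, ∀ a : A, DW a ∈ m)
    (I : Ideal A)
    (hI : I = Ideal.span (⋃ DW ∈ (V : Set (Derivation ℂ A A)), Set.range ⇑DW))
    (f : A) (hf : f ∈ I.radical) :
    DY f ∈ m := by
  subst hI
  let : Algebra ℚ A := Algebra.compHom A (algebraMap ℚ ℂ)
  exact derivation_normalizer_maps_radical_into_radical_ideal_general hV hm hmV hf
end

section
/- Let A be a commutative ℂ-algebra, let D : A → A be a ℂ-linear derivation, and let m be a radical ideal of A. If f ∈ m and there is an integer k ≥ 1 such that the k-fold iterate satisfies D^k(f^k) ∈ m, then D(f) ∈ m. -/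
/-!
By the Leibniz rule, every term of `D^[k] (f ^ k)` still contains a factor `f`, unless each of the
`k` applications of `D` hits a different factor; there are `k!` terms of the latter kind, all equal
to `(D f) ^ k`. Hence `D^[k] (f ^ k)` is congruent to `k! * (D f) ^ k` modulo any ideal containing
`f`, and when `k!` is invertible, `(D f) ^ k` lies in the ideal as soon as `D^[k] (f ^ k)` does.
-/

section Derivation

open scoped Nat

variable {R A : Type*} [CommSemiring R]

theorem derivation_pow_succ_mul [CommSemiring A] [Algebra R A] (D : Derivation R A A)
    (f g : A) (k : ℕ) :
    D (f ^ (k + 1) * g) = f ^ k * ((k + 1 : ℕ) * D f * g + f * D g) := by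
  simp only [Derivation.leibniz, Derivation.leibniz_pow, smul_eq_mul, nsmul_eq_mul,
    Nat.add_sub_cancel]
  ring

variable [CommRing A] [Algebra R A] (D : Derivation R A A) {I : Ideal A} {f : A}

-- The factor `g` makes the induction go through: it absorbs what `D` leaves beside `f ^ k`.
theorem derivation_iterate_pow_mul_smodEq (hf : f ∈ I) (k : ℕ) (g : A) :
    D^[k] (f ^ k * g) ≡ k ! * D f ^ k * g [SMOD I] := by
  induction k generalizing g with
  | zero => simp
  | succ k ih =>
    have hf_zero : k ! * D f ^ k * D g * f ≡ 0 [SMOD I] :=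
      SModEq.zero.2 (I.mul_mem_left _ hf)
    calc D^[k + 1] (f ^ (k + 1) * g)
        = D^[k] (f ^ k * ((k + 1 : ℕ) * D f * g + f * D g)) := by
          rw [Function.iterate_succ_apply, derivation_pow_succ_mul]
      _ ≡ k ! * D f ^ k * ((k + 1 : ℕ) * D f * g + f * D g) [SMOD I] := ih _
      _ = (k + 1)! * D f ^ (k + 1) * g + k ! * D f ^ k * D g * f := by
          rw [Nat.factorial_succ, Nat.cast_mul]
          ring
      _ ≡ (k + 1)! * D f ^ (k + 1) * g + 0 [SMOD I] := SModEq.rfl.add hf_zero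
      _ = (k + 1)! * D f ^ (k + 1) * g := add_zero _

theorem derivation_iterate_pow_mem_iff (hf : f ∈ I) {k : ℕ} (hk : IsUnit (k ! : A)) :
    D^[k] (f ^ k) ∈ I ↔ D f ^ k ∈ I := by
  have hmod : D^[k] (f ^ k) ≡ k ! * D f ^ k [SMOD I] := by
    simpa only [mul_one] using derivation_iterate_pow_mul_smodEq D hf k 1
  calc D^[k] (f ^ k) ∈ I
      ↔ k ! * D f ^ k ∈ I := by
        rw [← SModEq.zero, ← SModEq.zero]
        exact ⟨hmod.symm.trans, hmod.trans⟩
    _ ↔ D f ^ k ∈ I := I.unit_mul_mem_iff_mem hk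

theorem derivation_mem_radical_of_iterate_pow_mem_general (hf : f ∈ I) {k : ℕ}
    (hk : IsUnit (k ! : A)) (h : D^[k] (f ^ k) ∈ I) : D f ∈ I.radical :=
  ⟨k, (derivation_iterate_pow_mem_iff D hf hk).1 h⟩

end Derivation

/-- Let `A` be a commutative `ℂ`-algebra, `D` a `ℂ`-linear derivation of `A`,
and `m` a radical ideal of `A`.  If `f ∈ m` and `D^[k] (f ^ k) ∈ m` for some `k ≥ 1`, then
`D f ∈ m`. -/
theorem derivation_mem_radical_of_iterate_pow_mem
    {A : Type*} [CommRing A] [Algebra ℂ A]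
    (D : Derivation ℂ A A)
    (m : Ideal A) (hm : m.IsRadical)
    (f : A) (hf : f ∈ m)
    (k : ℕ) (hk : 1 ≤ k) (h : (⇑D)^[k] (f ^ k) ∈ m) :
    D f ∈ m :=
  hm <| derivation_mem_radical_of_iterate_pow_mem_general D hf
    (IsUnit.natCast_factorial_of_algebra ℂ k) h
end

section
/- Let 𝔟 be a finite-dimensional complex Lie algebra and let h, e ∈ 𝔟 satisfy ⁅h,e⁆ = 2e. Suppose ad(h) : 𝔟 → 𝔟 is diagonalizable, and suppose 𝔟 = 𝔱 ⊕ 𝔲 is a direct sum of two ℂ-subspaces, each invariant under ad(h), such that ⁅h,x⁆ = 0 for all x ∈ 𝔱 and such that the image of ad(e) equals 𝔲, i.e. ⁅e,𝔟⁆ = 𝔲. Then every eigenvalue of the restriction of ad(h) to 𝔲 is a positive even integer. -/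
/-!
Write `H = ad h` and `E = ad e`, so that `(H - μ) E = E (H - (μ - 2))`. If `μ - 2` is not an
eigenvalue of `H`, then `H - (μ - 2)` is onto, so `H - μ` maps the image `𝔲` of `E` onto itself and
`μ` is not an eigenvalue of `H` on `𝔲`. Moreover `H` maps `𝔟` into `𝔲`, so every eigenvector of `H`
with nonzero eigenvalue lies in `𝔲`. Hence an eigenvalue `μ ≠ 2` of `H` on `𝔲` is accompanied by
the eigenvalue `μ - 2` on `𝔲`, and as there are finitely many, this descent must end at `2`.
-/

open Module Module.End

theorem exists_pos_eq_mul_natCast_of_sub_mem {R : Type*} [Ring R] [NoZeroDivisors R] [CharZero R]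
    {S : Set R} (hS : S.Finite) {c : R} (hc : c ≠ 0) (hsub : ∀ a ∈ S, a ≠ c → a - c ∈ S)
    {a : R} (ha : a ∈ S) : ∃ n : ℕ, 0 < n ∧ a = c * n := by
  by_contra! hne
  have sub_mul_mem (k : ℕ) : a - c * k ∈ S := by
    induction k with
    | zero => simpa using ha
    | succ k ih =>
      have hk : a - c * k ≠ c := fun h ↦
        hne (k + 1) k.succ_pos (by rw [Nat.cast_succ, mul_add_one, ← sub_eq_iff_eq_add', h])
      simpa only [Nat.cast_succ, mul_add_one, sub_add_eq_sub_sub] using hsub _ ih hk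
  have sub_mul_injective : Function.Injective fun k : ℕ ↦ a - c * k := fun k l hkl ↦
    Nat.cast_injective (mul_left_cancel₀ hc (sub_right_injective hkl))
  exact Set.infinite_of_injective_forall_mem sub_mul_injective sub_mul_mem hS

theorem sub_algebraMap_mul_of_lie_eq_smul {R A : Type*} [CommRing R] [Ring A] [Algebra R A]
    {a b : A} {c : R} (hab : ⁅a, b⁆ = c • b) (r : R) :
    (a - algebraMap R A r) * b = b * (a - algebraMap R A (r - c)) := by
  rw [Ring.lie_def, sub_eq_iff_eq_add] at hab
  rw [sub_mul, mul_sub, hab, ← Algebra.smul_def, ← Algebra.commutes, ← Algebra.smul_def, sub_smul]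
  abel

attribute [local instance] LieRing.ofAssociativeRing in
theorem lie_toEnd_eq_smul {R L : Type*} (M : Type*) [CommRing R] [LieRing L] [LieAlgebra R L]
    [AddCommGroup M] [Module R M] [LieRingModule L M] [LieModule R L M] {h e : L} {c : R}
    (hhe : ⁅h, e⁆ = c • e) :
    ⁅LieModule.toEnd R L M h, LieModule.toEnd R L M e⁆ = c • LieModule.toEnd R L M e := by
  rw [← LieHom.map_lie, hhe, map_smul]

theorem range_le_of_codisjoint_of_le_ker {R M : Type*} [Ring R] [AddCommGroup M] [Module R M]
    {f : End R M} {p q : Submodule R M} (hpq : Codisjoint p q) (hp : p ≤ LinearMap.ker f)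
    (hq : q ≤ q.comap f) : LinearMap.range f ≤ q := by
  rw [LinearMap.range_eq_map, Submodule.map_le_iff_le_comap, ← hpq.eq_top, sup_le_iff]
  exact ⟨hp.trans (LinearMap.ker_le_comap f), hq⟩

section Field

variable {K V : Type*} [Field K] [AddCommGroup V] [Module K V]

theorem eigenspace_le_range (f : End K V) {μ : K} (hμ : μ ≠ 0) :
    f.eigenspace μ ≤ LinearMap.range f := fun x hx ↦
  ⟨μ⁻¹ • x, by rw [map_smul, mem_eigenspace_iff.mp hx, inv_smul_smul₀ hμ]⟩

variable [FiniteDimensional K V]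

theorem disjoint_range_ker_of_comp_eq_comp {W : Type*} [AddCommGroup W] [Module K W]
    {f : W →ₗ[K] V} {s : End K V} {t : End K W} (hst : s ∘ₗ f = f ∘ₗ t)
    (ht : Function.Surjective t) : Disjoint (LinearMap.range f) (LinearMap.ker s) := by
  have map_range : (LinearMap.range f).map s = LinearMap.range f := by
    rw [← LinearMap.range_comp, hst, LinearMap.range_comp_of_range_eq_top f
      (LinearMap.range_eq_top.mpr ht)]
  exact Submodule.disjoint_ker_of_finrank_le s (by rw [map_range])

theorem hasEigenvalue_sub_of_lie_eq_smul {H E : End K V} {c : K} (hHE : ⁅H, E⁆ = c • E)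
    {μ : K} {x : V} (hx : H.HasEigenvector μ x) (hxE : x ∈ LinearMap.range E) :
    H.HasEigenvalue (μ - c) := by
  by_contra hμ
  have surjective : Function.Surjective (H - algebraMap K (End K V) (μ - c)) := by
    rw [hasEigenvalue_iff, not_not, eigenspace_def] at hμ
    exact LinearMap.injective_iff_surjective.mp (LinearMap.ker_eq_bot.mp hμ)
  have disjoint : Disjoint (LinearMap.range E) (H.eigenspace μ) := by
    rw [eigenspace_def]
    exact disjoint_range_ker_of_comp_eq_comp (sub_algebraMap_mul_of_lie_eq_smul hHE μ) surjective
  exact hx.2 (Submodule.disjoint_def.mp disjoint x hxE hx.1)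

theorem eigenvalues_of_adH_on_image_of_adE_positive_even_general [CharZero K] {H E : End K V}
    {c : K} (hc : c ≠ 0) (hHE : ⁅H, E⁆ = c • E) (hrange : LinearMap.range H ≤ LinearMap.range E)
    {μ : K} {x : V} (hx : H.HasEigenvector μ x) (hxE : x ∈ LinearMap.range E) :
    ∃ n : ℕ, 0 < n ∧ μ = c * n := by
  let S : Set K := {ν | ∃ y ∈ LinearMap.range E, H.HasEigenvector ν y}
  have finite : S.Finite :=
    (finite_hasEigenvalue H).subset fun ν ⟨_, _, hy⟩ ↦ hasEigenvalue_of_hasEigenvector hy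
  have sub_mem : ∀ ν ∈ S, ν ≠ c → ν - c ∈ S := by
    rintro ν ⟨y, hyE, hy⟩ hν
    obtain ⟨z, hz⟩ := (hasEigenvalue_sub_of_lie_eq_smul hHE hy hyE).exists_hasEigenvector
    exact ⟨z, hrange (eigenspace_le_range H (sub_ne_zero.mpr hν) hz.1), hz⟩
  exact exists_pos_eq_mul_natCast_of_sub_mem finite hc sub_mem ⟨x, hxE, hx⟩

end Field

/-- Let `𝔟` be a finite-dimensional complex Lie algebra, `h, e ∈ 𝔟` with
`⁅h, e⁆ = 2 e`.  Suppose `ad h` is diagonalizable and `𝔟 = 𝔱 ⊕ 𝔲` with both summands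
invariant under `ad h`, `⁅h, 𝔱⁆ = 0` and `⁅e, 𝔟⁆ = 𝔲`.  Then every eigenvalue of `ad h`
restricted to `𝔲` is a positive even integer. -/
theorem eigenvalues_of_adH_on_image_of_adE_positive_even
    {B : Type*} [LieRing B] [LieAlgebra ℂ B] [FiniteDimensional ℂ B]
    (h e : B) (hhe : ⁅h, e⁆ = (2 : ℂ) • e)
    (hdiag : ⨆ μ : ℂ, Module.End.eigenspace (LieAlgebra.ad ℂ B h) μ = ⊤)
    (t u : Submodule ℂ B) (hcompl : IsCompl t u)
    (ht_inv : ∀ x ∈ t, ⁅h, x⁆ ∈ t)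
    (ht : ∀ x ∈ t, ⁅h, x⁆ = 0)
    (hu : ∀ x ∈ u, ⁅h, x⁆ ∈ u)
    (hrange : LinearMap.range (LieAlgebra.ad ℂ B e) = u)
    (μ : ℂ) (x : B) (hx : x ∈ u) (hx0 : x ≠ 0) (heig : ⁅h, x⁆ = μ • x) :
    ∃ n : ℕ, 0 < n ∧ μ = 2 * n := by
  have range_le : LinearMap.range (LieAlgebra.ad ℂ B h) ≤ u :=
    range_le_of_codisjoint_of_le_ker hcompl.codisjoint ht hu
  subst hrange
  exact eigenvalues_of_adH_on_image_of_adE_positive_even_general two_ne_zero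
    (lie_toEnd_eq_smul B hhe) range_le ⟨mem_eigenspace_iff.mpr heig, hx0⟩ hx
end

section
/- Let K be a field, let 𝔥 be a finite-dimensional Lie algebra over K, let 𝔫 ⊆ 𝔥 be a Lie ideal and 𝔩 ⊆ 𝔥 a Lie subalgebra such that 𝔥 = 𝔫 ⊕ 𝔩 as K-vector spaces. Let e ∈ 𝔥 and write e = e_n + e_l with e_n ∈ 𝔫 and e_l ∈ 𝔩. Then the dimension of the centralizer of e_l in 𝔩 is at most the dimension of the centralizer of e in 𝔥, i.e. dim_K {x ∈ 𝔩 : ⁅e_l,x⁆ = 0} ≤ dim_K {x ∈ 𝔥 : ⁅e,x⁆ = 0}. (In particular, if e is a regular element of the Lie algebra 𝔥 of a principally paired group 𝔥 = 𝔫 ⊕ 𝔩 with 𝔫 the nilradical and 𝔩 a Levi subalgebra, then e_l is a regular element of 𝔩.) -/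
/-!
Let `C` be the centralizer of `e_l` in `𝔩`. Both `𝔫` and `C` are carried into `𝔫` by `ad e`: the
former because `𝔫` is an ideal, the latter because `e` and `e_l` agree modulo `𝔫`. The preimage of
`𝔫` under `ad e` therefore has dimension at least `dim 𝔫 + dim C`, and by rank-nullity at most
`dim 𝔫 + dim (ker (ad e))`; cancel `dim 𝔫`.
-/

open Cardinal

universe u

section RankNullity

variable {R : Type*} {M : Type u} [Ring R] [HasRankNullity.{u} R] [AddCommGroup M] [Module R M]

theorem rank_add_rank_eq_rank_sup_of_disjoint {p q : Submodule R M} (hpq : Disjoint p q) :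
    Module.rank R p + Module.rank R q = Module.rank R ↥(p ⊔ q) := by
  have := nontrivial_of_hasRankNullity R
  rw [← Submodule.rank_sup_add_rank_inf_eq, hpq.eq_bot, rank_bot, add_zero]

theorem rank_le_rank_ker_of_disjoint_of_le_comap {f : M →ₗ[R] M} {p q : Submodule R M}
    (hp : Module.rank R p < ℵ₀) (hpq : Disjoint p q) (hfp : p ≤ p.comap f) (hfq : q ≤ p.comap f) :
    Module.rank R q ≤ Module.rank R f.ker := by
  suffices Module.rank R q + Module.rank R p ≤ Module.rank R f.ker + Module.rank R p from
    (add_le_add_iff_of_lt_aleph0 hp).mp this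
  calc Module.rank R q + Module.rank R p
      = Module.rank R ↥(p ⊔ q) := by rw [add_comm, rank_add_rank_eq_rank_sup_of_disjoint hpq]
    _ ≤ Module.rank R (p.comap f) := Submodule.rank_mono (sup_le hfp hfq)
    _ ≤ Module.rank R p + Module.rank R f.ker := by
      simpa only [lift_id] using LinearMap.lift_rank_comap_le (f := f) p
    _ = Module.rank R f.ker + Module.rank R p := add_comm _ _

end RankNullity

section Ideal

variable {R H : Type*} [CommRing R] [LieRing H] [LieAlgebra R H] (N : LieIdeal R H)

theorem lieIdeal_le_comap_ad (x : H) :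
    N.toSubmodule ≤ N.toSubmodule.comap (LieAlgebra.ad R H x) :=
  fun n hn ↦ lie_mem_right R H N x n hn

theorem ker_ad_le_comap_ad_add {n : H} (hn : n ∈ N) (x : H) :
    (LieAlgebra.ad R H x).ker ≤ N.toSubmodule.comap (LieAlgebra.ad R H (n + x)) := by
  intro c hc
  have hxc : ⁅x, c⁆ = 0 := hc
  have hadd : ⁅n + x, c⁆ = ⁅n, c⁆ := by rw [add_lie, hxc, add_zero]
  change ⁅n + x, c⁆ ∈ N
  exact hadd ▸ lie_mem_left R H N n c hn

end Ideal

theorem finrank_centralizer_levi_component_le_general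
    {R H : Type*} [CommRing R] [IsDomain R] [LieRing H] [LieAlgebra R H]
    (N : LieIdeal R H) (hN : Module.rank R N < ℵ₀) (L : Submodule R H)
    (hdisj : Disjoint N.toSubmodule L) (e en el : H) (hen : en ∈ N) (he : e = en + el) :
    Module.rank R ↥(L ⊓ (LieAlgebra.ad R H el).ker) ≤ Module.rank R (LieAlgebra.ad R H e).ker := by
  subst he
  exact rank_le_rank_ker_of_disjoint_of_le_comap hN (hdisj.mono_right inf_le_left)
    (lieIdeal_le_comap_ad N _) (inf_le_right.trans (ker_ad_le_comap_ad_add N hen el))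

/-- Let `K` be a field, `𝔥` a finite-dimensional Lie algebra over `K`,
`𝔫 ⊆ 𝔥` a Lie ideal and `𝔩 ⊆ 𝔥` a Lie subalgebra with `𝔥 = 𝔫 ⊕ 𝔩` as `K`-vector spaces.
If `e = e_n + e_l` with `e_n ∈ 𝔫`, `e_l ∈ 𝔩`, then the centralizer of `e_l` in `𝔩` has
dimension at most that of the centralizer of `e` in `𝔥`. -/
theorem finrank_centralizer_levi_component_le
    {K : Type*} [Field K] {H : Type*} [LieRing H] [LieAlgebra K H]
    [FiniteDimensional K H]
    (N : LieIdeal K H) (L : LieSubalgebra K H)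
    (hcompl : IsCompl (N : Submodule K H) L.toSubmodule)
    (e en el : H) (hen : en ∈ N) (hel : el ∈ L) (he : e = en + el) :
    Module.finrank K ↥(L.toSubmodule ⊓ LinearMap.ker (LieAlgebra.ad K H el)) ≤
      Module.finrank K ↥(LinearMap.ker (LieAlgebra.ad K H e)) :=
  toNat_le_toNat (finrank_centralizer_levi_component_le_general N (Module.rank_lt_aleph0 K N)
    L.toSubmodule hcompl.disjoint e en el hen he) (Module.rank_lt_aleph0 K _)
end

section
/- Let L be a Lie algebra over a field K and let e ∈ L be an element whose adjoint operator ad(e) is nilpotent. Let 𝔱 ⊆ L be a K-linear subspace such that L = 𝔱 + ⁅L,e⁆, i.e. every element of L is the sum of an element of 𝔱 and an element of the image of ad(e). Then the Lie subalgebra of L generated by 𝔱 ∪ {e} is all of L. -/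
/-!
Modulo a Lie subalgebra `H` containing both `t` and `e`, the operator `ad e` is surjective, and
hence so are all its powers. One of these powers is zero, so `L ⧸ H = 0`.
-/

section Module

variable {R M : Type*} [Semiring R] [AddCommMonoid M] [Module R M]
  {f : Module.End R M} {p : Submodule R M}

theorem sup_range_pow_eq_top_of_mem_invtSubmodule (hp : p ∈ f.invtSubmodule)
    (hsup : p ⊔ f.range = ⊤) (n : ℕ) : p ⊔ (f ^ n).range = ⊤ := by
  induction n with
  | zero => simp [Module.End.one_eq_id]
  | succ n ih =>
    have hmap : p.map f ≤ p := (Module.End.mem_invtSubmodule_iff_map_le f).mp hp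
    calc p ⊔ (f ^ (n + 1)).range
        = p ⊔ (p.map f ⊔ (f ^ n).range.map f) := by
          rw [← sup_assoc, sup_eq_left.mpr hmap, pow_succ', Module.End.mul_eq_comp,
            LinearMap.range_comp]
      _ = p ⊔ (p ⊔ (f ^ n).range).map f := by rw [Submodule.map_sup]
      _ = p ⊔ f.range := by rw [ih, Submodule.map_top]
      _ = ⊤ := hsup

theorem eq_top_of_isNilpotent_of_sup_range_eq_top (hf : IsNilpotent f)
    (hp : p ∈ f.invtSubmodule) (hsup : p ⊔ f.range = ⊤) : p = ⊤ := by
  obtain ⟨n, hn⟩ := hf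
  simpa [hn] using sup_range_pow_eq_top_of_mem_invtSubmodule hp hsup n

end Module

section LieAlgebra

variable {R L : Type*} [CommRing R] [LieRing L] [LieAlgebra R L] {e : L}

theorem lieSubalgebra_eq_top_of_sup_range_ad_eq_top {H : LieSubalgebra R L} (he : e ∈ H)
    (hnil : IsNilpotent (LieAlgebra.ad R L e))
    (hsup : H.toSubmodule ⊔ (LieAlgebra.ad R L e).range = ⊤) : H = ⊤ := by
  have hinvt : H.toSubmodule ∈ (LieAlgebra.ad R L e).invtSubmodule :=
    fun _ hx ↦ H.lie_mem he hx
  rw [← LieSubalgebra.toSubmodule_inj, LieSubalgebra.top_toSubmodule]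
  exact eq_top_of_isNilpotent_of_sup_range_eq_top hnil hinvt hsup

theorem lieSpan_union_singleton_eq_top_of_sup_range_ad_eq_top_general
    (hnil : IsNilpotent (LieAlgebra.ad R L e)) (t : Submodule R L)
    (hsum : t ⊔ (LieAlgebra.ad R L e).range = ⊤) :
    LieSubalgebra.lieSpan R L ((t : Set L) ∪ {e}) = ⊤ := by
  have hsub : (t : Set L) ∪ {e} ⊆ LieSubalgebra.lieSpan R L ((t : Set L) ∪ {e}) :=
    LieSubalgebra.subset_lieSpan
  have ht : t ≤ (LieSubalgebra.lieSpan R L ((t : Set L) ∪ {e})).toSubmodule :=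
    fun _ hx ↦ hsub (.inl hx)
  exact lieSubalgebra_eq_top_of_sup_range_ad_eq_top (hsub (.inr rfl)) hnil
    (top_unique (hsum.ge.trans (sup_le_sup_right ht _)))

end LieAlgebra

/-- Let `L` be a Lie algebra over a field `K` and `e ∈ L` with `ad e`
nilpotent.  If `𝔱 ⊆ L` is a `K`-linear subspace with `L = 𝔱 + im (ad e)`, then the Lie
subalgebra of `L` generated by `𝔱 ∪ {e}` is all of `L`. -/
theorem lieSpan_union_singleton_eq_top_of_sup_range_ad_eq_top
    {K : Type*} [Field K] {L : Type*} [LieRing L] [LieAlgebra K L]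
    (e : L) (hnil : IsNilpotent (LieAlgebra.ad K L e))
    (t : Submodule K L)
    (hsum : t ⊔ LinearMap.range (LieAlgebra.ad K L e) = ⊤) :
    LieSubalgebra.lieSpan K L ((t : Set L) ∪ {e}) = ⊤ :=
  lieSpan_union_singleton_eq_top_of_sup_range_ad_eq_top_general hnil t hsum
end

section
/- Let k be a field, let Y be a reduced scheme of finite type over k, and let Z be a closed subscheme of Y. Assume that every closed point p of Y is contained in some closed subscheme A of Y which is an integral scheme, projective over k, and whose intersection with Z is nonempty. Then the restriction homomorphism k[Y] → k[Z] on global regular functions is injective. -/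
open AlgebraicGeometry CategoryTheory MvPolynomial

attribute [local instance] MvPolynomial.gradedAlgebra

/-- Projective `n`-space over a field `k`, as `Proj` of the standard graded polynomial ring
`k[X₀, …, Xₙ]`. -/
noncomputable def ProjectiveSpace' (k : Type) [Field k] (n : ℕ) : Scheme :=
  AlgebraicGeometry.Proj (homogeneousSubmodule (Fin (n + 1)) k)

/-- The structure morphism `ℙⁿ_k ⟶ Spec k`. -/
noncomputable def ProjectiveSpace'.toSpec (k : Type) [Field k] (n : ℕ) :
    ProjectiveSpace' k n ⟶ Spec (CommRingCat.of k) :=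
  AlgebraicGeometry.Proj.toSpecZero (homogeneousSubmodule (Fin (n + 1)) k) ≫
    Spec.map (CommRingCat.ofHom
      (algebraMap k ↥(homogeneousSubmodule (Fin (n + 1)) k 0)))

/-- A scheme `A` with structure morphism `g : A ⟶ Spec k` is *projective over `k`* if it
admits a closed immersion into some projective space `ℙⁿ_k` over `Spec k`. -/
def IsProjectiveOverField (k : Type) [Field k] {A : Scheme}
    (g : A ⟶ Spec (CommRingCat.of k)) : Prop :=
  ∃ (n : ℕ) (ι : A ⟶ ProjectiveSpace' k n),
    IsClosedImmersion ι ∧ ι ≫ ProjectiveSpace'.toSpec k n = g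

/-!
Global functions on an integral scheme `A` that is universally closed over a field form a field, so
a global function on `Y` pulled back to `A` is either zero or nowhere vanishing. If `s ≠ 0` on the
reduced scheme `Y`, then `s` is nonvanishing at some closed point, because `Y` is a Jacobson space.
It is then nonvanishing on all of a connector through that point, in particular somewhere on `Z`.
-/

universe u

section ProjectiveSpace

theorem finiteType_gradeZero {ι R S : Type*} [AddMonoid ι] [CommSemiring R] [CommSemiring S]
    [Algebra R S] (𝒜 : ι → Submodule R S) [SetLike.GradedMonoid 𝒜] [Algebra.FiniteType R S] :
    Algebra.FiniteType (𝒜 0) S :=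
  have : IsScalarTower R (𝒜 0) S := .of_algebraMap_eq fun _ ↦ rfl
  .of_restrictScalars_finiteType R (𝒜 0) S

theorem algebraMap_homogeneousSubmodule_zero_surjective (σ R : Type*) [CommSemiring R] :
    Function.Surjective (algebraMap R (homogeneousSubmodule σ R 0)) := by
  rintro ⟨p, hp⟩
  rw [homogeneousSubmodule_zero, Submodule.mem_one] at hp
  obtain ⟨r, rfl⟩ := hp
  exact ⟨r, rfl⟩

theorem ProjectiveSpace'.universallyClosed_toSpec (k : Type) [Field k] (n : ℕ) :
    UniversallyClosed (ProjectiveSpace'.toSpec k n) := by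
  have := finiteType_gradeZero (homogeneousSubmodule (Fin (n + 1)) k)
  have := IsClosedImmersion.spec_of_surjective
    (CommRingCat.ofHom (algebraMap k (homogeneousSubmodule (Fin (n + 1)) k 0)))
    (algebraMap_homogeneousSubmodule_zero_surjective (Fin (n + 1)) k)
  unfold ProjectiveSpace'.toSpec ProjectiveSpace'
  infer_instance

variable {k : Type} [Field k] {A : Scheme} {g : A ⟶ Spec (CommRingCat.of k)}

theorem IsProjectiveOverField.universallyClosed (hg : IsProjectiveOverField k g) :
    UniversallyClosed g := by
  obtain ⟨n, ι, _, rfl⟩ := hg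
  have := ProjectiveSpace'.universallyClosed_toSpec k n
  infer_instance

theorem IsProjectiveOverField.isField_globalSections [IsIntegral A]
    (hg : IsProjectiveOverField k g) : IsField Γ(A, ⊤) :=
  have := hg.universallyClosed
  isField_of_universallyClosed k g

end ProjectiveSpace

section BasicOpen

variable {X Y : Scheme.{u}}

theorem exists_isClosed_singleton_mem_basicOpen [IsReduced Y] [JacobsonSpace Y] {U : Y.Opens}
    {s : Γ(Y, U)} (hs : s ≠ 0) : ∃ p ∈ Y.basicOpen s, IsClosed ({p} : Set Y) := by
  have hne : (Y.basicOpen s : Set Y).Nonempty := by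
    rwa [← TopologicalSpace.Opens.ne_bot_iff_nonempty, Ne, basicOpen_eq_bot_iff]
  exact nonempty_inter_closedPoints hne (Y.basicOpen s).isOpen.isLocallyClosed

theorem appTop_ne_zero_of_mem_basicOpen (j : X ⟶ Y) {s : Γ(Y, ⊤)} {x : X}
    (hx : j x ∈ Y.basicOpen s) : j.appTop s ≠ 0 := by
  intro hs
  have hx' : x ∈ j ⁻¹ᵁ Y.basicOpen s := hx
  rw [Scheme.preimage_basicOpen_top, hs, Scheme.basicOpen_zero] at hx'
  exact hx'

theorem mem_basicOpen_of_isUnit_appTop (j : X ⟶ Y) {s : Γ(Y, ⊤)} (hs : IsUnit (j.appTop s))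
    (x : X) : j x ∈ Y.basicOpen s := by
  suffices x ∈ j ⁻¹ᵁ Y.basicOpen s from this
  rw [Scheme.preimage_basicOpen_top, Scheme.basicOpen_of_isUnit _ hs]
  trivial

theorem mem_basicOpen_of_isField_globalSections (j : X ⟶ Y) (hX : IsField Γ(X, ⊤))
    {s : Γ(Y, ⊤)} {x : X} (hx : j x ∈ Y.basicOpen s) (x' : X) : j x' ∈ Y.basicOpen s :=
  let := hX.toField
  mem_basicOpen_of_isUnit_appTop j (appTop_ne_zero_of_mem_basicOpen j hx).isUnit x'

end BasicOpen

theorem injective_global_sections_restriction_of_projective_connectors_general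
    {Y Z : Scheme.{u}} [IsReduced Y] [JacobsonSpace Y] (i : Z ⟶ Y)
    (H : ∀ p : Y, IsClosed ({p} : Set Y) →
      ∃ (A : Scheme.{u}) (j : A ⟶ Y), IsField Γ(A, ⊤) ∧ p ∈ Set.range j ∧
        (Set.range j ∩ Set.range i).Nonempty) :
    Function.Injective (i.app ⊤) := by
  rw [injective_iff_map_eq_zero (i.app ⊤).hom]
  intro s hs
  by_contra hs_ne
  obtain ⟨p, hp, hp_closed⟩ := exists_isClosed_singleton_mem_basicOpen hs_ne
  obtain ⟨A, j, hA, ⟨a, rfl⟩, _, ⟨b, rfl⟩, z, hz⟩ := H p hp_closed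
  have hzs : i z ∈ Y.basicOpen s := hz ▸ mem_basicOpen_of_isField_globalSections j hA hp b
  exact appTop_ne_zero_of_mem_basicOpen i hzs hs

/-- Let `k` be a field, `Y` a reduced scheme of finite type over `k`, and
`Z ⟶ Y` a closed subscheme.  If every closed point `p` of `Y` lies on a closed subscheme
`A ⟶ Y` which is integral, projective over `k`, and meets `Z`, then the restriction map
`k[Y] → k[Z]` on global regular functions is injective. -/
theorem injective_global_sections_restriction_of_projective_connectors
    (k : Type) [Field k] (Y Z : Scheme)
    (f : Y ⟶ Spec (CommRingCat.of k)) [IsReduced Y]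
    [LocallyOfFiniteType f] [QuasiCompact f]
    (i : Z ⟶ Y) [IsClosedImmersion i]
    (H : ∀ p : Y, IsClosed ({p} : Set Y) →
      ∃ (A : Scheme) (j : A ⟶ Y), IsClosedImmersion j ∧ IsIntegral A ∧
        IsProjectiveOverField k (j ≫ f) ∧ p ∈ Set.range j.base ∧
        (Set.range j.base ∩ Set.range i.base).Nonempty) :
    Function.Injective (i.app ⊤) := by
  have := LocallyOfFiniteType.jacobsonSpace f
  refine injective_global_sections_restriction_of_projective_connectors_general i fun p hp ↦ ?_
  obtain ⟨A, j, _, _, hproj, hpj, hmeet⟩ := H p hp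
  exact ⟨A, j, hproj.isField_globalSections, hpj, hmeet⟩
end
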